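/- For every r ≥ 1 the map Δ_r : MH^*_{(r)} → MH^{*+1}_{(r)} satisfies Δ_r ∘ Δ_r = 0, and for every m the cohomology Ker(Δ_r : MH^m_{(r)} → MH^{m+1}_{(r)}) / Im(Δ_r : MH^{m−1}_{(r)} → MH^m_{(r)}) is isomorphic to MH^m_{(r+1)}. -/

import Mathlib

namespace Massey

variable (N : ℤ → Type) [∀ k, AddCommGroup (N k)] [∀ k, Module ℂ (N k)]
variable (d θ : ∀ i j : ℤ, N i →ₗ[ℂ] N j)

/-- The cocycles in degree `m`. -/
noncomputable abbrev Z (m : ℤ) : Submodule ℂ (N m) := LinearMap.ker (d m (m + 1))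

/-- The coboundaries in degree `m`, as a submodule of the cocycles. -/
noncomputable abbrev Bsub (m : ℤ) : Submodule ℂ (Z N d m) :=
  (LinearMap.range (d (m - 1) m)).comap (Z N d m).subtype

/-- The cohomology `H^m(N*) = Z^m / B^m`. -/
noncomputable abbrev Hcoh (m : ℤ) := Z N d m ⧸ Bsub N d m

/-- The cohomology class of a cocycle. -/
noncomputable def cl (m : ℤ) (x : N m) (hx : d m (m + 1) x = 0) : Hcoh N d m :=
  Submodule.Quotient.mk ⟨x, LinearMap.mem_ker.mpr hx⟩

/-- `ω` is an `r`-chain: `d ω₀ = 0` and `d ω_{i+1} = θ ω_i`. -/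
def IsChain (m : ℤ) (r : ℕ) (ω : Fin r → N m) : Prop :=
  (∀ h0 : 0 < r, d m (m + 1) (ω ⟨0, h0⟩) = 0) ∧
  ∀ (i : ℕ) (h : i + 1 < r), d m (m + 1) (ω ⟨i + 1, h⟩) = θ m (m + 1) (ω ⟨i, by omega⟩)

/-- `MZ^m_{(r)}`: classes in `H^m` admitting an `r`-chain starting from them. -/
def MZset (m : ℤ) (r : ℕ) : Set (Hcoh N d m) :=
  {a | ∃ (h0 : 0 < r) (ω : Fin r → N m) (hc : IsChain N d θ m r ω),
    a = cl N d m (ω ⟨0, h0⟩) (hc.1 h0)}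

/-- `MB^m_{(r)}`: classes in `H^m` of the cocycles `θ ω_{r-1}` over all
`(r-1)`-chains `ω` (in degree `m - 1`). -/
def MBset (m : ℤ) (r : ℕ) : Set (Hcoh N d m) :=
  {b | ∃ (hr : 0 < r - 1) (ω : Fin (r - 1) → N (m - 1))
    (_hc : IsChain N d θ (m - 1) (r - 1) ω)
    (hz : d m (m + 1) (θ (m - 1) m (ω ⟨r - 1 - 1, by omega⟩)) = 0),
    b = cl N d m (θ (m - 1) m (ω ⟨r - 1 - 1, by omega⟩)) hz}

/-- `MZ^m_{(r)}` as a submodule (it is a linear subspace, cf. the theorem). -/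
noncomputable def MZsub (m : ℤ) (r : ℕ) : Submodule ℂ (Hcoh N d m) :=
  Submodule.span ℂ (MZset N d θ m r)

/-- `MB^m_{(r)}` as a submodule (it is a linear subspace, cf. the theorem). -/
noncomputable def MBsub (m : ℤ) (r : ℕ) : Submodule ℂ (Hcoh N d m) :=
  Submodule.span ℂ (MBset N d θ m r)

/-- `MH^m_{(r)} = MZ^m_{(r)} / MB^m_{(r)}`. -/
noncomputable abbrev MH (m : ℤ) (r : ℕ) :=
  MZsub N d θ m r ⧸ (MBsub N d θ m r).comap (MZsub N d θ m r).subtype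

/-!
Sending an `r`-chain `ω` to `[ω₁]` and to `[θ ω_r]` gives two linear maps `first` and `last` on the
space of `r`-chains, and `Δ_r` is the linear relation `first ω ↦ last ω`. Truncating, extending and
shifting chains shows that
* `MZ_{(r)} = range first` and `MB_{(r)} ≤ last (ker first)`;
* `MZ_{(r+1)} = first (ker last)` and `MB_{(r+1)} = range last`.

Hence `Ker Δ_r` and `Im Δ_r` are the images in `MH_{(r)}` of `MZ_{(r+1)}` and `MB_{(r+1)}`. As
`(θ ω_r, 0, 0, …)` is again a chain, `MB_{(r+1)} ≤ MZ_{(r+1)}`, which gives `Δ_r ∘ Δ_r = 0`, and the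
isomorphism is then the third isomorphism theorem.
-/

theorem nonempty_range_quotient_map_equiv {R X Q : Type*} [Ring R] [AddCommGroup X] [Module R X]
    [AddCommGroup Q] [Module R Q] (f : X →ₗ[R] Q) {Y : Submodule R X}
    (hY : LinearMap.ker f ≤ Y) :
    Nonempty
      ((↥(LinearMap.range f) ⧸ (Y.map f).comap (LinearMap.range f).subtype) ≃ₗ[R] X ⧸ Y) := by
  let g := ((Y.map f).comap (LinearMap.range f).subtype).mkQ ∘ₗ f.rangeRestrict
  have surjective_g : Function.Surjective g :=
    (Submodule.mkQ_surjective _).comp f.surjective_rangeRestrict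
  have ker_g : LinearMap.ker g = Y :=
    calc LinearMap.ker g = (Y.map f).comap f := by
          rw [LinearMap.ker_comp, Submodule.ker_mkQ]; rfl
      _ = Y := by rw [Submodule.comap_map_eq, sup_eq_left.2 hY]
  exact ⟨(g.quotKerEquivOfSurjective surjective_g).symm ≪≫ₗ Submodule.quotEquivOfEq _ _ ker_g⟩

section Chains

variable {N d θ} {m : ℤ} {n : ℕ}

theorem isChain_succ_iff {ω : Fin (n + 1) → N m} :
    IsChain N d θ m (n + 1) ω ↔
      d m (m + 1) (ω 0) = 0 ∧
        ∀ i : Fin n, d m (m + 1) (ω i.succ) = θ m (m + 1) (ω i.castSucc) :=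
  ⟨fun h => ⟨h.1 n.succ_pos, fun i => h.2 i (Nat.succ_lt_succ i.2)⟩,
    fun h => ⟨fun _ => h.1, fun i hi => h.2 ⟨i, Nat.lt_of_succ_lt_succ hi⟩⟩⟩

theorem IsChain.cons_zero {ω : Fin (n + 1) → N m} (hω : IsChain N d θ m (n + 1) ω) :
    IsChain N d θ m (n + 2) (Fin.cons 0 ω) := by
  rw [isChain_succ_iff] at hω ⊢
  refine ⟨map_zero _, Fin.cases ?_ fun i => ?_⟩
  · simpa using hω.1
  · simpa using hω.2 i

theorem isChain_cons_zero_right {x : N m} (hd : d m (m + 1) x = 0) (hθ : θ m (m + 1) x = 0) :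
    IsChain N d θ m (n + 1) (Fin.cons x 0) := by
  refine isChain_succ_iff.2 ⟨hd, fun i => ?_⟩
  cases n with
  | zero => exact i.elim0
  | succ n => cases i using Fin.cases <;> simp [hθ]

theorem IsChain.init {ω : Fin (n + 2) → N m} (hω : IsChain N d θ m (n + 2) ω) :
    IsChain N d θ m (n + 1) (Fin.init ω) := by
  rw [isChain_succ_iff] at hω ⊢
  exact ⟨hω.1, fun i => hω.2 i.castSucc⟩

theorem IsChain.snoc {ω : Fin (n + 1) → N m} (hω : IsChain N d θ m (n + 1) ω) {z : N m}
    (hz : d m (m + 1) z = θ m (m + 1) (ω (Fin.last n))) :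
    IsChain N d θ m (n + 2) (Fin.snoc ω z : Fin (n + 2) → N m) := by
  rw [isChain_succ_iff] at hω ⊢
  refine ⟨by simpa using hω.1, Fin.lastCases ?_ fun i => ?_⟩
  · simpa using hz
  · simpa only [← Fin.castSucc_succ, Fin.snoc_castSucc] using hω.2 i

theorem IsChain.exists_d_last_eq_θ {ω : Fin (n + 1) → N m} (hω : IsChain N d θ m (n + 1) ω) :
    ∃ x, d m (m + 1) (ω (Fin.last n)) = θ m (m + 1) x := by
  rw [isChain_succ_iff] at hω
  cases n with
  | zero => exact ⟨0, hω.1.trans (map_zero _).symm⟩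
  | succ n => exact ⟨_, hω.2 (Fin.last n)⟩

variable (N d θ m n) in
/-- The vector space of `n`-chains of degree `m`, whatever class they start from. -/
def chains : Submodule ℂ (Fin n → N m) where
  carrier := {ω | IsChain N d θ m n ω}
  zero_mem' := ⟨fun _ => map_zero _, fun _ _ => by simp⟩
  add_mem' hω hη :=
    ⟨fun h0 => by simp [hω.1 h0, hη.1 h0], fun i hi => by simp [hω.2 i hi, hη.2 i hi]⟩
  smul_mem' c ω hω := ⟨fun h0 => by simp [hω.1 h0], fun i hi => by simp [hω.2 i hi]⟩

variable (N d θ m n) in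
/-- The class `[ω₁]` from which a chain starts, as a linear map. Chains have length `n + 1`, so
that they have a first and a last entry. -/
noncomputable def firstClass : chains N d θ m (n + 1) →ₗ[ℂ] Hcoh N d m :=
  (Bsub N d m).mkQ ∘ₗ
    (LinearMap.proj 0 ∘ₗ (chains N d θ m (n + 1)).subtype).codRestrict (Z N d m)
      fun ω => ω.2.1 n.succ_pos

theorem firstClass_eq_of_apply_zero_eq {k : ℕ} {ω : chains N d θ m (n + 1)}
    {η : chains N d θ m (k + 1)} (h : ω.1 0 = η.1 0) :
    firstClass N d θ m n ω = firstClass N d θ m k η :=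
  congrArg (Bsub N d m).mkQ (Subtype.ext h)

theorem firstClass_eq_zero {ω : chains N d θ m (n + 1)} (h : ω.1 0 = 0) :
    firstClass N d θ m n ω = 0 :=
  (firstClass_eq_of_apply_zero_eq (η := (0 : chains N d θ m (n + 1))) h).trans (map_zero _)

theorem MZsub_succ_eq_range_firstClass :
    MZsub N d θ m (n + 1) = LinearMap.range (firstClass N d θ m n) := by
  have h : MZset N d θ m (n + 1) = LinearMap.range (firstClass N d θ m n) := by
    ext a
    constructor
    · rintro ⟨-, ω, hω, rfl⟩
      exact ⟨⟨ω, hω⟩, rfl⟩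
    · rintro ⟨ω, rfl⟩
      exact ⟨n.succ_pos, ω.1, ω.2, rfl⟩
  rw [MZsub, h, Submodule.span_eq]

theorem firstClass_mem_MZsub (ω : chains N d θ m (n + 1)) :
    firstClass N d θ m n ω ∈ MZsub N d θ m (n + 1) :=
  MZsub_succ_eq_range_firstClass.ge ⟨ω, rfl⟩

variable (hθd : ∀ m : ℤ, (θ (m + 1) (m + 1 + 1)).comp (d m (m + 1)) =
    -((d (m + 1) (m + 1 + 1)).comp (θ m (m + 1))))
  (hθθ : ∀ m : ℤ, (θ (m + 1) (m + 1 + 1)).comp (θ m (m + 1)) = 0)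

include hθd hθθ in
theorem IsChain.d_θ_last {ω : Fin (n + 1) → N m} (hω : IsChain N d θ m (n + 1) ω) :
    d (m + 1) (m + 1 + 1) (θ m (m + 1) (ω (Fin.last n))) = 0 := by
  have θ_d_last : θ (m + 1) (m + 1 + 1) (d m (m + 1) (ω (Fin.last n))) = 0 := by
    obtain ⟨x, d_last⟩ := hω.exists_d_last_eq_θ
    rw [d_last]
    exact LinearMap.congr_fun (hθθ m) x
  have anticomm := LinearMap.congr_fun (hθd m) (ω (Fin.last n))
  exact neg_eq_zero.1 (anticomm.symm.trans θ_d_last)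

/-- The class `[θ ω_r]` of the cocycle in which a chain ends, as a linear map. -/
noncomputable def lastClass (m : ℤ) (n : ℕ) :
    chains N d θ m (n + 1) →ₗ[ℂ] Hcoh N d (m + 1) :=
  (Bsub N d (m + 1)).mkQ ∘ₗ
    (θ m (m + 1) ∘ₗ LinearMap.proj (Fin.last n) ∘ₗ
      (chains N d θ m (n + 1)).subtype).codRestrict (Z N d (m + 1))
      fun ω => IsChain.d_θ_last hθd hθθ ω.2

theorem lastClass_eq_zero_iff {ω : chains N d θ m (n + 1)} :
    lastClass hθd hθθ m n ω = 0 ↔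
      ∃ z : N m, d m (m + 1) z = θ m (m + 1) (ω.1 (Fin.last n)) := by
  refine (Submodule.Quotient.mk_eq_zero _).trans ?_
  change (∃ z : N (m + 1 - 1), d (m + 1 - 1) (m + 1) z = _) ↔ _
  rw [add_sub_cancel_right]
  rfl

theorem lastClass_eq_of_apply_last_eq {k : ℕ} {ω : chains N d θ m (n + 1)}
    {η : chains N d θ m (k + 1)} (h : ω.1 (Fin.last n) = η.1 (Fin.last k)) :
    lastClass hθd hθθ m n ω = lastClass hθd hθθ m k η :=
  congrArg (Bsub N d (m + 1)).mkQ (Subtype.ext (congrArg (θ m (m + 1)) h))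

theorem MBsub_add_two_eq_range_lastClass :
    MBsub N d θ (m + 1) (n + 2) = LinearMap.range (lastClass hθd hθθ m n) := by
  have h : MBset N d θ (m + 1) (n + 2) = LinearMap.range (lastClass hθd hθθ m n) := by
    rw [MBset, add_sub_cancel_right]
    ext b
    constructor
    · rintro ⟨-, ω, hω, -, rfl⟩
      exact ⟨⟨ω, hω⟩, rfl⟩
    · rintro ⟨ω, rfl⟩
      exact ⟨n.succ_pos, ω.1, ω.2, IsChain.d_θ_last hθd hθθ ω.2, rfl⟩
  rw [MBsub, h, Submodule.span_eq]

theorem MBsub_one : MBsub N d θ m 1 = ⊥ := by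
  have h : MBset N d θ m 1 = ∅ := by simp [MBset]
  rw [MBsub, h, Submodule.span_empty]

theorem MBsub_succ_le_map_lastClass_ker_firstClass :
    MBsub N d θ (m + 1) (n + 1) ≤
      (LinearMap.ker (firstClass N d θ m n)).map (lastClass hθd hθθ m n) := by
  cases n with
  | zero => exact MBsub_one.le.trans bot_le
  | succ n =>
    rw [MBsub_add_two_eq_range_lastClass hθd hθθ]
    rintro _ ⟨ω, rfl⟩
    exact ⟨⟨Fin.cons 0 ω.1, IsChain.cons_zero ω.2⟩, firstClass_eq_zero rfl,
      lastClass_eq_of_apply_last_eq hθd hθθ rfl⟩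

theorem MZsub_add_two_eq_map_firstClass_ker_lastClass :
    MZsub N d θ m (n + 2) =
      (LinearMap.ker (lastClass hθd hθθ m n)).map (firstClass N d θ m n) := by
  rw [MZsub_succ_eq_range_firstClass]
  apply le_antisymm
  · rintro _ ⟨ω, rfl⟩
    have d_last := (isChain_succ_iff.1 ω.2).2 (Fin.last n)
    exact ⟨⟨Fin.init ω.1, IsChain.init ω.2⟩,
      (lastClass_eq_zero_iff hθd hθθ).2 ⟨_, d_last⟩, firstClass_eq_of_apply_zero_eq rfl⟩
  · rintro _ ⟨ω, last_eq_zero, rfl⟩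
    obtain ⟨z, hz⟩ := (lastClass_eq_zero_iff hθd hθθ).1 last_eq_zero
    have snoc_zero : (Fin.snoc ω.1 z : Fin (n + 2) → N m) 0 = ω.1 0 :=
      Fin.snoc_castSucc (α := fun _ => N m) z ω.1 0
    exact ⟨⟨_, IsChain.snoc ω.2 hz⟩, firstClass_eq_of_apply_zero_eq snoc_zero⟩

theorem MZsub_add_two_le : MZsub N d θ m (n + 2) ≤ MZsub N d θ m (n + 1) := by
  simp only [MZsub_succ_eq_range_firstClass]
  rintro _ ⟨ω, rfl⟩
  exact ⟨⟨Fin.init ω.1, IsChain.init ω.2⟩, firstClass_eq_of_apply_zero_eq rfl⟩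

include hθd hθθ in
theorem MBsub_succ_le_add_two : MBsub N d θ (m + 1) (n + 1) ≤ MBsub N d θ (m + 1) (n + 2) := by
  rw [MBsub_add_two_eq_range_lastClass hθd hθθ]
  exact (MBsub_succ_le_map_lastClass_ker_firstClass hθd hθθ).trans LinearMap.map_le_range

theorem lastClass_mem_MZsub (ω : chains N d θ m (n + 1)) (k : ℕ) :
    lastClass hθd hθθ m n ω ∈ MZsub N d θ (m + 1) (k + 1) := by
  have single : IsChain N d θ (m + 1) (k + 1) (Fin.cons (θ m (m + 1) (ω.1 (Fin.last n))) 0) :=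
    isChain_cons_zero_right (IsChain.d_θ_last hθd hθθ ω.2) (LinearMap.congr_fun (hθθ m) _)
  exact MZsub_succ_eq_range_firstClass.ge ⟨⟨_, single⟩, rfl⟩

variable (N d θ m n) in
/-- The map `MZ_{(r+1)} → MH_{(r)}` for `r = n + 1`, induced by the inclusion
`MZ_{(r+1)} ≤ MZ_{(r)}`. -/
noncomputable def MZsubToMH : MZsub N d θ m (n + 2) →ₗ[ℂ] MH N d θ m (n + 1) :=
  Submodule.mkQ _ ∘ₗ Submodule.inclusion MZsub_add_two_le

theorem ker_MZsubToMH :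
    LinearMap.ker (MZsubToMH N d θ m n) =
      (MBsub N d θ m (n + 1)).comap (MZsub N d θ m (n + 2)).subtype := by
  rw [MZsubToMH, LinearMap.ker_comp, Submodule.ker_mkQ]
  rfl

theorem exists_mk_firstClass_eq (x : MH N d θ m (n + 1)) :
    ∃ ω : chains N d θ m (n + 1),
      Submodule.Quotient.mk ⟨firstClass N d θ m n ω, firstClass_mem_MZsub ω⟩ = x := by
  obtain ⟨⟨a, ha⟩, rfl⟩ := Submodule.Quotient.mk_surjective _ x
  obtain ⟨ω, rfl⟩ := MZsub_succ_eq_range_firstClass.le ha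
  exact ⟨ω, rfl⟩

variable {hθd hθθ}
  {Δ : MH N d θ m (n + 1) →ₗ[ℂ] MH N d θ (m + 1) (n + 1)}
  (hΔ : ∀ ω : chains N d θ m (n + 1),
    Δ (Submodule.Quotient.mk ⟨firstClass N d θ m n ω, firstClass_mem_MZsub ω⟩) =
      Submodule.Quotient.mk ⟨lastClass hθd hθθ m n ω, lastClass_mem_MZsub hθd hθθ ω n⟩)

include hΔ

theorem ker_eq_range_MZsubToMH : LinearMap.ker Δ = LinearMap.range (MZsubToMH N d θ m n) := by
  apply le_antisymm
  · intro x hx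
    obtain ⟨ω, rfl⟩ := exists_mk_firstClass_eq x
    rw [LinearMap.mem_ker, hΔ, Submodule.Quotient.mk_eq_zero] at hx
    obtain ⟨η, first_η, last_η⟩ := MBsub_succ_le_map_lastClass_ker_firstClass hθd hθθ hx
    have mem : firstClass N d θ m n ω ∈ MZsub N d θ m (n + 2) := by
      rw [MZsub_add_two_eq_map_firstClass_ker_lastClass hθd hθθ]
      refine ⟨ω - η, ?_, ?_⟩
      · exact (map_sub _ _ _).trans (sub_eq_zero.2 last_η.symm)
      · rw [map_sub, LinearMap.mem_ker.1 first_η, sub_zero]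
    exact ⟨⟨_, mem⟩, rfl⟩
  · rintro _ ⟨⟨a, ha⟩, rfl⟩
    obtain ⟨ω, last_ω, rfl⟩ := (MZsub_add_two_eq_map_firstClass_ker_lastClass hθd hθθ).le ha
    have last_mem : lastClass hθd hθθ m n ω ∈ MBsub N d θ (m + 1) (n + 1) := by
      rw [LinearMap.mem_ker.1 last_ω]
      exact zero_mem _
    exact (hΔ ω).trans ((Submodule.Quotient.mk_eq_zero _).2 last_mem)

theorem range_eq_map_MZsubToMH :
    LinearMap.range Δ =
      ((MBsub N d θ (m + 1) (n + 2)).comap (MZsub N d θ (m + 1) (n + 2)).subtype).map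
        (MZsubToMH N d θ (m + 1) n) := by
  have MB_eq := MBsub_add_two_eq_range_lastClass (m := m) (n := n) hθd hθθ
  apply le_antisymm
  · rintro _ ⟨x, rfl⟩
    obtain ⟨ω, rfl⟩ := exists_mk_firstClass_eq x
    exact ⟨⟨_, lastClass_mem_MZsub hθd hθθ ω (n + 1)⟩, MB_eq.ge ⟨ω, rfl⟩, (hΔ ω).symm⟩
  · rintro _ ⟨⟨b, _⟩, hb, rfl⟩
    obtain ⟨ω, rfl⟩ := MB_eq.le hb
    exact ⟨_, hΔ ω⟩

end Chains

theorem massey_differential_squares_to_zero_and_cohomology_general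
    (hθd : ∀ m : ℤ, (θ (m + 1) (m + 1 + 1)).comp (d m (m + 1)) =
      -((d (m + 1) (m + 1 + 1)).comp (θ m (m + 1))))
    (hθθ : ∀ m : ℤ, (θ (m + 1) (m + 1 + 1)).comp (θ m (m + 1)) = 0)
    (n : ℕ) (Δ : ∀ m : ℤ, MH N d θ m (n + 1) →ₗ[ℂ] MH N d θ (m + 1) (n + 1))
    (hΔ : ∀ (m : ℤ) (ω : Fin (n + 1) → N m) (hω : IsChain N d θ m (n + 1) ω)
      (ha : cl N d m (ω 0) (hω.1 n.succ_pos) ∈ MZsub N d θ m (n + 1))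
      (hz : d (m + 1) (m + 1 + 1) (θ m (m + 1) (ω (Fin.last n))) = 0)
      (hb : cl N d (m + 1) (θ m (m + 1) (ω (Fin.last n))) hz ∈ MZsub N d θ (m + 1) (n + 1)),
      Δ m (Submodule.Quotient.mk ⟨_, ha⟩) = Submodule.Quotient.mk ⟨_, hb⟩) :
    (∀ m : ℤ, (Δ (m + 1)).comp (Δ m) = 0) ∧
    (∀ m : ℤ, Nonempty
      ((↥(LinearMap.ker (Δ (m + 1))) ⧸
          (LinearMap.range (Δ m)).comap (LinearMap.ker (Δ (m + 1))).subtype)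
        ≃ₗ[ℂ] MH N d θ (m + 1) (n + 2))) := by
  have hΔ_chain (m : ℤ) (ω : chains N d θ m (n + 1)) :
      Δ m (Submodule.Quotient.mk ⟨firstClass N d θ m n ω, firstClass_mem_MZsub ω⟩) =
        Submodule.Quotient.mk ⟨lastClass hθd hθθ m n ω, lastClass_mem_MZsub hθd hθθ ω n⟩ :=
    hΔ m ω.1 ω.2 _ (IsChain.d_θ_last hθd hθθ ω.2) _
  have ker_Δ (m : ℤ) := ker_eq_range_MZsubToMH (hΔ_chain m)
  have range_Δ (m : ℤ) := range_eq_map_MZsubToMH (hΔ_chain m)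
  refine ⟨fun m => ?_, fun m => ?_⟩
  · rw [← LinearMap.range_le_ker_iff, ker_Δ, range_Δ]
    exact LinearMap.map_le_range
  · rw [ker_Δ, range_Δ]
    apply nonempty_range_quotient_map_equiv
    rw [ker_MZsubToMH]
    exact Submodule.comap_mono (MBsub_succ_le_add_two hθd hθθ)

set_option maxHeartbeats 2000000 in
set_option synthInstance.maxHeartbeats 400000 in
/-- With `(N*, d, θ)` as before, let `Δ` be the family of Massey
product differentials `Δ_r : MH^m_{(r)} → MH^{m+1}_{(r)}` (characterized by sending
the class of `a = [ω₁]` to the class of `θ ω_r` for any `r`-chain `ω` starting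
from `a`).  Then `Δ_r ∘ Δ_r = 0` and for every degree the cohomology
`Ker Δ_r / Im Δ_r` is isomorphic to `MH_{(r+1)}`. -/
theorem massey_differential_squares_to_zero_and_cohomology
    (hd : ∀ i j : ℤ, j ≠ i + 1 → d i j = 0)
    (hθ : ∀ i j : ℤ, j ≠ i + 1 → θ i j = 0)
    (hdd : ∀ i j l : ℤ, (d j l).comp (d i j) = 0)
    (hθd : ∀ i j l : ℤ, (θ j l).comp (d i j) = -((d j l).comp (θ i j)))
    (hθθ : ∀ i j l : ℤ, (θ j l).comp (θ i j) = 0)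
    (r : ℕ) (hr : 1 ≤ r)
    (Δ : ∀ m : ℤ, MH N d θ m r →ₗ[ℂ] MH N d θ (m + 1) r)
    (hΔ : ∀ (m : ℤ) (a : Hcoh N d m) (ha : a ∈ MZsub N d θ m r)
      (h0 : 0 < r) (ω : Fin r → N m) (hc : IsChain N d θ m r ω),
      a = cl N d m (ω ⟨0, h0⟩) (hc.1 h0) →
      ∀ (b : Hcoh N d (m + 1)) (hb : b ∈ MZsub N d θ (m + 1) r)
        (hz : d (m + 1) (m + 1 + 1) (θ m (m + 1) (ω ⟨r - 1, by omega⟩)) = 0),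
        b = cl N d (m + 1) (θ m (m + 1) (ω ⟨r - 1, by omega⟩)) hz →
        Δ m (Submodule.Quotient.mk ⟨a, ha⟩) = Submodule.Quotient.mk ⟨b, hb⟩) :
    -- `Δ_r ∘ Δ_r = 0`:
    (∀ m : ℤ, (Δ (m + 1)).comp (Δ m) = 0) ∧
    -- `Ker Δ_r / Im Δ_r ≅ MH_{(r+1)}` (in every degree `m + 1`):
    (∀ m : ℤ, Nonempty
      ((↥(LinearMap.ker (Δ (m + 1))) ⧸
          (LinearMap.range (Δ m)).comap (LinearMap.ker (Δ (m + 1))).subtype)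
        ≃ₗ[ℂ] MH N d θ (m + 1) (r + 1))) := by
  obtain ⟨n, rfl⟩ := Nat.exists_eq_add_of_le' hr
  exact massey_differential_squares_to_zero_and_cohomology_general N d θ (fun _ => hθd _ _ _)
    (fun _ => hθθ _ _ _) n Δ fun m ω hω _ hz _ => hΔ m _ _ n.succ_pos ω hω rfl _ _ hz rfl

end Massey
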